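/- There exist δ ∈ (θ/2, 1/2 − θ), ε > 0 and a subset S' ⊆ S of density 1 in S such that for every ε' > 0 there is C > 0 with the following property: for every n_k ∈ S' and every ζ ∈ ℤ²∖{0} with |ζ| ≤ n_k^ε, setting L₀ = n_k^δ, one has Σ(ζ, n_k) := Σ_{ξ ∈ A(n_k,L₀), 4π²|ξ+ζ|² < n_k} (4π²|ξ+ζ|² − n_k)^{−2} + Σ_{ξ ∈ A(n_k,L₀), 4π²|ξ+ζ|² > n_{k+1}} (4π²|ξ+ζ|² − n_{k+1})^{−2} ≤ C · n_k^{θ − 2δ + ε'}. -/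

import Mathlib

open Real MeasureTheory Filter Finset

noncomputable section

/-- `m` is a sum of two integer squares. -/
def IsSum2Sq (m : ℕ) : Prop := ∃ a b : ℤ, (m : ℤ) = a ^ 2 + b ^ 2

/-- The increasing enumeration `n₀ < n₁ < ⋯` of `S = {4π²m : m a sum of two squares}`. -/
noncomputable def nseq (k : ℕ) : ℝ := 4 * Real.pi ^ 2 * (Nat.nth IsSum2Sq k)

/-- The set `S` of Laplace eigenvalues of the standard torus. -/
def Sset : Set ℝ := Set.range nseq

/-- The number of elements of `S'` (a subset of `S`) that are `≤ X`. -/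
noncomputable def countLE (S' : Set ℝ) (X : ℝ) : ℕ :=
  Nat.card {k : ℕ // nseq k ∈ S' ∧ nseq k ≤ X}

/-- `S' ⊆ S` has density one in `S`. -/
def HasDensityOne (S' : Set ℝ) : Prop :=
  Tendsto (fun X : ℝ => (countLE S' X : ℝ) / (countLE Sset X)) atTop (nhds 1)

/-- The Euclidean norm of a lattice vector. -/
noncomputable def znorm (ξ : Fin 2 → ℤ) : ℝ := Real.sqrt (∑ i, (ξ i : ℝ) ^ 2)

/-- Huxley's exponent in the circle law. -/
noncomputable def θH : ℝ := 133 / 416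

/-- `4π²|ξ|²`. -/
noncomputable def qf (ξ : Fin 2 → ℤ) : ℝ := 4 * Real.pi ^ 2 * ∑ i, (ξ i : ℝ) ^ 2

/-- The deterministic lattice sum `Σ(ζ, n_k)`, with `L₀ = n_k^δ`. -/
noncomputable def SigmaSum (ζ : Fin 2 → ℤ) (nk nk1 L0 : ℝ) : ℝ :=
  (∑' ξ : Fin 2 → ℤ,
      if |qf ξ - nk| ≤ L0 ∧ qf (ξ + ζ) < nk then ((qf (ξ + ζ) - nk) ^ 2)⁻¹ else 0)
  + ∑' ξ : Fin 2 → ℤ,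
      if |qf ξ - nk| ≤ L0 ∧ nk1 < qf (ξ + ζ) then ((qf (ξ + ζ) - nk1) ^ 2)⁻¹ else 0

/-!
If no point `ξ` of the annulus `A(n_k, n_k^δ)` is nearly orthogonal to a short `ζ ≠ 0`, say
`|ξ·ζ| ≥ n_k^σ`, then `4π²|ξ + ζ|² - n_k = 8π² ξ·ζ + O(n_k^δ + |ζ|²)` has size at least a constant
times `n_k^σ`. The greedy algorithm gives `n_{k+1} - n_k = O(n_k^{1/4})`, so for `σ > 1/4` the same
holds for the distance to `n_{k+1}`. Every term of `Σ(ζ, n_k)` is then `O(n_k^{-2σ})`, and the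
annulus has `O(n_k^{1/2 + δ/2})` points, because a column of it contains `O(n_k^{δ/2})`.

The exceptional `n_k ≤ X` are few: each is determined, up to an error `X^δ`, by a `ξ` that is in
turn determined by `ζ`, the small integer `ξ·ζ` and one coordinate of `ξ`, which leaves
`O(X^{2ε + 1/2 + σ + δ})` possibilities. On the other hand `S` has at least a constant times
`X / log² X` elements up to `X`, by Cauchy–Schwarz and the bound `O(N² log² N)` for the additive
energy of the first `N` squares: `a² + b² = c² + d²` means `(a - c)(a + c) = (d - b)(d + b)`, which
is controlled by the divisor function.
-/

section SquareSums

open scoped Pointwise Combinatorics.Additive ArithmeticFunction.sigma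

lemma card_filter_mul_eq_le_sigma_zero_mul (s : Finset (ℕ × ℕ)) {m n : ℕ}
    (hm : m ≠ 0) (hn : n ≠ 0) : #{p ∈ s | m * n = p.1 * p.2} ≤ σ 0 m * σ 0 n := by
  have hsub : {p ∈ s | m * n = p.1 * p.2} ⊆ (m * n).divisorsAntidiagonal := fun p hp ↦
    Nat.mem_divisorsAntidiagonal.2 ⟨(mem_filter.1 hp).2.symm, mul_ne_zero hm hn⟩
  calc #{p ∈ s | m * n = p.1 * p.2}
      ≤ #(m * n).divisors := by
        grw [hsub, ← Nat.map_div_right_divisors, card_map]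
    _ ≤ #m.divisors * #n.divisors := by
        rw [Nat.divisors_mul]
        exact card_mul_le
    _ = σ 0 m * σ 0 n := by simp only [ArithmeticFunction.sigma_zero_apply]

lemma mulEnergy_Ioc_le_sq_sum_sigma_zero (M : ℕ) :
    Eₘ[Ioc 0 M] ≤ (∑ n ∈ Ioc 0 M, σ 0 n) ^ 2 := by
  calc Eₘ[Ioc 0 M]
      = ∑ p ∈ Ioc 0 M ×ˢ Ioc 0 M, #{q ∈ Ioc 0 M ×ˢ Ioc 0 M | p.1 * p.2 = q.1 * q.2} := by
        simp only [mulEnergy_eq_card_filter, card_filter, sum_product (Ioc 0 M ×ˢ Ioc 0 M)]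
    _ ≤ ∑ p ∈ Ioc 0 M ×ˢ Ioc 0 M, σ 0 p.1 * σ 0 p.2 := by
        refine sum_le_sum fun p hp ↦ ?_
        simp only [mem_product, Finset.mem_Ioc] at hp
        exact card_filter_mul_eq_le_sigma_zero_mul _ hp.1.1.ne' hp.2.1.ne'
    _ = (∑ n ∈ Ioc 0 M, σ 0 n) ^ 2 := by rw [sum_product, sq, sum_mul_sum]

lemma sum_sigma_zero_Ioc_le (M : ℕ) :
    ((∑ n ∈ Ioc 0 M, σ 0 n : ℕ) : ℝ) ≤ M * (1 + log M) := by
  calc ((∑ n ∈ Ioc 0 M, σ 0 n : ℕ) : ℝ)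
      = ∑ n ∈ Ioc 0 M, ((M / n : ℕ) : ℝ) := by
        rw [ArithmeticFunction.sum_Ioc_sigma0_eq_sum_div, Nat.cast_sum]
    _ ≤ ∑ n ∈ Ioc 0 M, (M : ℝ) * (n : ℝ)⁻¹ :=
        sum_le_sum fun n _ ↦ Nat.cast_div_le.trans_eq (div_eq_mul_inv _ _)
    _ = M * (harmonic M : ℝ) := by
        rw [← mul_sum, harmonic_eq_sum_Icc]
        push_cast
        rfl
    _ ≤ M * (1 + log M) := by
        gcongr
        exact harmonic_le_one_add_log M

/-- The quadruples `((a, c), (b, d))` of integers in `[1, N]` with `a² + b² = c² + d²`, ordered as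
in the definition of the additive energy. -/
def squareQuadruples (N : ℕ) : Finset ((ℕ × ℕ) × ℕ × ℕ) :=
  {p ∈ (Ioc 0 N ×ˢ Ioc 0 N) ×ˢ Ioc 0 N ×ˢ Ioc 0 N | p.1.1 ^ 2 + p.2.1 ^ 2 = p.1.2 ^ 2 + p.2.2 ^ 2}

lemma mem_squareQuadruples {N a b c d : ℕ} : ((a, c), (b, d)) ∈ squareQuadruples N ↔
    ((a ∈ Ioc 0 N ∧ c ∈ Ioc 0 N) ∧ b ∈ Ioc 0 N ∧ d ∈ Ioc 0 N) ∧ a ^ 2 + b ^ 2 = c ^ 2 + d ^ 2 := by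
  simp only [squareQuadruples, mem_filter, mem_product]

lemma addEnergy_image_sq_le_card_squareQuadruples (N : ℕ) :
    E[(Ioc 0 N).image (· ^ 2)] ≤ #(squareQuadruples N) := by
  refine (card_le_card fun p hp ↦ ?_).trans (card_image_le (s := squareQuadruples N)
    (f := fun p ↦ ((p.1.1 ^ 2, p.1.2 ^ 2), (p.2.1 ^ 2, p.2.2 ^ 2))))
  obtain ⟨⟨_, _⟩, _, _⟩ := p
  simp only [mem_filter, mem_product, mem_image] at hp
  obtain ⟨⟨⟨⟨a, ha, rfl⟩, c, hc, rfl⟩, ⟨b, hb, rfl⟩, d, hd, rfl⟩, hsum⟩ := hp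
  exact mem_image.2 ⟨((a, c), (b, d)), mem_squareQuadruples.2 ⟨⟨⟨ha, hc⟩, hb, hd⟩, hsum⟩, rfl⟩

lemma card_squareQuadruples_filter_eq_le (N : ℕ) :
    #{p ∈ squareQuadruples N | p.1.1 = p.1.2} ≤ N ^ 2 := by
  calc #{p ∈ squareQuadruples N | p.1.1 = p.1.2}
      ≤ #((Ioc 0 N ×ˢ Ioc 0 N).image fun q ↦ ((q.1, q.1), (q.2, q.2))) := by
        refine card_le_card fun ⟨⟨a, c⟩, b, d⟩ hp ↦ ?_
        obtain ⟨hmem, rfl : a = c⟩ := mem_filter.1 hp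
        obtain ⟨⟨⟨ha, -⟩, hb, -⟩, hsum⟩ := mem_squareQuadruples.1 hmem
        obtain rfl : b = d := Nat.pow_left_injective two_ne_zero (Nat.add_left_cancel hsum)
        exact mem_image.2 ⟨(a, b), mem_product.2 ⟨ha, hb⟩, rfl⟩
    _ ≤ N ^ 2 := card_image_le.trans_eq (by simp [sq])

lemma card_squareQuadruples_filter_lt_le (N : ℕ) :
    #{p ∈ squareQuadruples N | p.1.2 < p.1.1} ≤ Eₘ[Ioc 0 (2 * N)] := by
  have lt_of_mem {a b c d : ℕ} (h : ((a, c), (b, d)) ∈ squareQuadruples N) (hca : c < a) :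
      b < d := by
    have := (mem_squareQuadruples.1 h).2
    by_contra!
    nlinarith
  refine card_le_card_of_injOn
    (fun p ↦ ((p.1.1 - p.1.2, p.2.2 - p.2.1), (p.1.1 + p.1.2, p.2.2 + p.2.1))) ?_ ?_
  · rintro ⟨⟨a, c⟩, b, d⟩ hp
    obtain ⟨hmem, hca : c < a⟩ := mem_filter.1 (mem_coe.1 hp)
    have hbd := lt_of_mem hmem hca
    obtain ⟨hbox, hsum⟩ := mem_squareQuadruples.1 hmem
    have hmul : (a - c) * (a + c) = (d - b) * (d + b) := by
      rw [mul_comm, ← Nat.sq_sub_sq, mul_comm, ← Nat.sq_sub_sq]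
      omega
    simp only [Finset.mem_Ioc] at hbox
    simp only [coe_filter, Set.mem_ofPred_eq, mem_product, Finset.mem_Ioc]
    exact ⟨by omega, hmul⟩
  · rintro ⟨⟨a, c⟩, b, d⟩ hp ⟨⟨a', c'⟩, b', d'⟩ hp' heq
    obtain ⟨hmem, hca : c < a⟩ := mem_filter.1 (mem_coe.1 hp)
    obtain ⟨hmem', hca' : c' < a'⟩ := mem_filter.1 (mem_coe.1 hp')
    have hbd := lt_of_mem hmem hca
    have hbd' := lt_of_mem hmem' hca'
    simp only [Prod.mk.injEq] at heq ⊢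
    omega

lemma card_squareQuadruples_filter_gt_le (N : ℕ) :
    #{p ∈ squareQuadruples N | p.1.1 < p.1.2} ≤ Eₘ[Ioc 0 (2 * N)] := by
  refine (card_le_card_of_injOn (fun p ↦ ((p.1.2, p.1.1), (p.2.2, p.2.1))) ?_ ?_).trans
    (card_squareQuadruples_filter_lt_le N)
  · rintro ⟨⟨a, c⟩, b, d⟩ hp
    simp only [coe_filter, Set.mem_ofPred_eq, mem_squareQuadruples] at hp ⊢
    tauto
  · rintro ⟨⟨a, c⟩, b, d⟩ - ⟨⟨a', c'⟩, b', d'⟩ - heq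
    simp only [Prod.mk.injEq] at heq ⊢
    tauto

lemma addEnergy_image_sq_le (N : ℕ) :
    E[(Ioc 0 N).image (· ^ 2)] ≤ N ^ 2 + 2 * Eₘ[Ioc 0 (2 * N)] := by
  set Q := squareQuadruples N
  have hcover : Q ⊆ {p ∈ Q | p.1.1 = p.1.2} ∪
      ({p ∈ Q | p.1.2 < p.1.1} ∪ {p ∈ Q | p.1.1 < p.1.2}) := fun p hp ↦ by
    simp only [mem_union, mem_filter, hp, true_and]
    omega
  calc E[(Ioc 0 N).image (· ^ 2)]
      ≤ #Q := addEnergy_image_sq_le_card_squareQuadruples N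
    _ ≤ #{p ∈ Q | p.1.1 = p.1.2} + (#{p ∈ Q | p.1.2 < p.1.1} + #{p ∈ Q | p.1.1 < p.1.2}) := by
        grw [hcover, card_union_le, card_union_le]
    _ ≤ N ^ 2 + 2 * Eₘ[Ioc 0 (2 * N)] := by
        grw [card_squareQuadruples_filter_eq_le, card_squareQuadruples_filter_lt_le,
          card_squareQuadruples_filter_gt_le, two_mul Eₘ[Ioc 0 (2 * N)]]

lemma addEnergy_image_sq_le_log {N : ℕ} (hN : 1 ≤ N) :
    (E[(Ioc 0 N).image (· ^ 2)] : ℝ) ≤ N ^ 2 * (9 * (1 + log (2 * N)) ^ 2) := by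
  have hlog : 0 ≤ log (2 * N) := log_nonneg (by norm_cast; omega)
  calc (E[(Ioc 0 N).image (· ^ 2)] : ℝ)
      ≤ N ^ 2 + 2 * ((∑ n ∈ Ioc 0 (2 * N), σ 0 n : ℕ) : ℝ) ^ 2 := mod_cast
        (addEnergy_image_sq_le N).trans (by grw [mulEnergy_Ioc_le_sq_sum_sigma_zero])
    _ ≤ N ^ 2 + 2 * (2 * N * (1 + log (2 * N))) ^ 2 := by
        gcongr
        exact_mod_cast sum_sigma_zero_Ioc_le (2 * N)
    _ = N ^ 2 * (1 + 8 * (1 + log (2 * N)) ^ 2) := by ring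
    _ ≤ N ^ 2 * (9 * (1 + log (2 * N)) ^ 2) := by
        gcongr
        nlinarith

lemma sq_le_card_image_sq_add_image_sq_mul {N : ℕ} (hN : 1 ≤ N) :
    (N : ℝ) ^ 2 ≤
      #((Ioc 0 N).image (· ^ 2) + (Ioc 0 N).image (· ^ 2)) * (9 * (1 + log (2 * N)) ^ 2) := by
  set squares := (Ioc 0 N).image (· ^ 2)
  have hcard : #squares = N := by
    rw [card_image_of_injective _ (Nat.pow_left_injective two_ne_zero), Nat.card_Ioc, Nat.sub_zero]
  have hcauchy : (N : ℝ) ^ 2 * N ^ 2 ≤ #(squares + squares) * E[squares] := by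
    exact_mod_cast hcard ▸ le_card_add_mul_addEnergy squares squares
  refine le_of_mul_le_mul_left ?_ (by positivity : (0 : ℝ) < N ^ 2)
  calc (N : ℝ) ^ 2 * N ^ 2
      ≤ #(squares + squares) * E[squares] := hcauchy
    _ ≤ #(squares + squares) * (N ^ 2 * (9 * (1 + log (2 * N)) ^ 2)) := by
        gcongr
        exact addEnergy_image_sq_le_log hN
    _ = N ^ 2 * (#(squares + squares) * (9 * (1 + log (2 * N)) ^ 2)) := by ring

end SquareSums

section Counting

open Asymptotics
open scoped Pointwise

lemma setOf_isSum2Sq_infinite : {m | IsSum2Sq m}.Infinite :=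
  (Set.infinite_range_of_injective (Nat.pow_left_injective two_ne_zero)).mono <| by
    rintro _ ⟨a, rfl⟩
    exact ⟨a, 0, by push_cast; ring⟩

lemma thirtySix_le_four_mul_pi_sq : 36 ≤ 4 * π ^ 2 := by
  nlinarith [pi_gt_three]

lemma four_mul_pi_sq_le_forty : 4 * π ^ 2 ≤ 40 := by
  nlinarith [pi_gt_three, pi_lt_d2]

lemma nseq_strictMono : StrictMono nseq := fun i j hij ↦
  mul_lt_mul_of_pos_left (mod_cast Nat.nth_strictMono setOf_isSum2Sq_infinite hij) (by positivity)

lemma nth_le_nseq (k : ℕ) : (Nat.nth IsSum2Sq k : ℝ) ≤ nseq k :=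
  le_mul_of_one_le_left (by positivity) (by linarith [thirtySix_le_four_mul_pi_sq])

lemma finite_setOf_nseq_le (X : ℝ) : {k | nseq k ≤ X}.Finite := by
  refine (Set.finite_Iic ⌊X⌋₊).subset fun k (hk : nseq k ≤ X) ↦ Nat.le_floor ?_
  calc (k : ℝ) ≤ Nat.nth IsSum2Sq k :=
        mod_cast (Nat.nth_strictMono setOf_isSum2Sq_infinite).le_apply
    _ ≤ X := (nth_le_nseq k).trans hk

lemma countLE_eq_ncard (S' : Set ℝ) (X : ℝ) :
    countLE S' X = {k | nseq k ∈ S' ∧ nseq k ≤ X}.ncard :=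
  Nat.card_coe_set_eq _

lemma countLE_Sset (X : ℝ) : countLE Sset X = {k | nseq k ≤ X}.ncard := by
  simp only [countLE_eq_ncard, Sset, Set.mem_range_self, true_and]

lemma ncard_le_card_of_forall_nth_mem {K : Set ℕ} {T : Finset ℤ}
    (h : ∀ k ∈ K, (Nat.nth IsSum2Sq k : ℤ) ∈ T) : K.ncard ≤ #T := by
  rw [← Set.ncard_coe_finset]
  exact Set.ncard_le_ncard_of_injOn _ h
    (Nat.cast_injective.comp (Nat.nth_injective setOf_isSum2Sq_infinite)).injOn

lemma card_le_countLE_Sset {T : Finset ℕ} {X : ℝ}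
    (h : ∀ m ∈ T, IsSum2Sq m ∧ 4 * π ^ 2 * m ≤ X) : #T ≤ countLE Sset X := by
  classical
  have hsub : (T : Set ℕ) ⊆ Nat.nth IsSum2Sq '' {k | nseq k ≤ X} := fun m hm ↦ by
    obtain ⟨hsum, hle⟩ := h m hm
    refine ⟨Nat.count IsSum2Sq m, ?_, Nat.nth_count hsum⟩
    rwa [Set.mem_ofPred_eq, nseq, Nat.nth_count hsum]
  rw [countLE_Sset, ← Set.ncard_coe_finset]
  exact (Set.ncard_le_ncard hsub ((finite_setOf_nseq_le X).image _)).trans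
    (Set.ncard_image_le (finite_setOf_nseq_le X))

lemma card_image_sq_add_image_sq_le_countLE_Sset {N : ℕ} {X : ℝ} (hN : 80 * (N : ℝ) ^ 2 ≤ X) :
    #((Ioc 0 N).image (· ^ 2) + (Ioc 0 N).image (· ^ 2)) ≤ countLE Sset X := by
  refine card_le_countLE_Sset fun m hm ↦ ?_
  simp only [Finset.mem_add, mem_image, Finset.mem_Ioc, exists_exists_and_eq_and] at hm
  obtain ⟨a, ⟨-, ha⟩, b, ⟨-, hb⟩, rfl⟩ := hm
  refine ⟨⟨a, b, by push_cast; ring⟩, ?_⟩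
  push_cast
  calc 4 * π ^ 2 * ((a : ℝ) ^ 2 + (b : ℝ) ^ 2) ≤ 40 * ((N : ℝ) ^ 2 + (N : ℝ) ^ 2) := by
        gcongr
        exact four_mul_pi_sq_le_forty
    _ ≤ X := by linarith

lemma le_countLE_Sset_mul_log_sq {X : ℝ} (hX : 324 ≤ X) :
    X / 324 ≤ countLE Sset X * (9 * (1 + log X) ^ 2) := by
  set N := ⌊√X / 9⌋₊
  have hsq : √X ^ 2 = X := sq_sqrt (by linarith)
  have hsqrt : 18 ≤ √X := le_sqrt_of_sq_le (by linarith)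
  have hN_le : N ≤ √X / 9 := Nat.floor_le (by positivity)
  have hN_ge : √X / 18 ≤ N := by linarith [Nat.lt_floor_add_one (√X / 9)]
  have hN_one : (1 : ℝ) ≤ N := by linarith
  calc X / 324 ≤ (N : ℝ) ^ 2 := by nlinarith
    _ ≤ _ := sq_le_card_image_sq_add_image_sq_mul (mod_cast hN_one)
    _ ≤ countLE Sset X * (9 * (1 + log X) ^ 2) := by
        gcongr
        · exact card_image_sq_add_image_sq_le_countLE_Sset (by nlinarith)
        · linarith [log_nonneg (by linarith : 1 ≤ 2 * (N : ℝ))]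
        · nlinarith

lemma div_log_sq_isBigO_countLE_Sset :
    (fun X ↦ X / log X ^ 2) =O[atTop] fun X ↦ (countLE Sset X : ℝ) := by
  refine IsBigO.of_bound (324 * 36) ?_
  filter_upwards [eventually_ge_atTop 324, tendsto_log_atTop.eventually_ge_atTop 1] with X hX hlog
  rw [norm_of_nonneg (by positivity), norm_of_nonneg (by positivity), div_le_iff₀ (by positivity)]
  calc X = 324 * (X / 324) := by ring
    _ ≤ 324 * (countLE Sset X * (9 * (log X + log X) ^ 2)) := by
        grw [le_countLE_Sset_mul_log_sq hX, hlog]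
    _ = 324 * 36 * countLE Sset X * log X ^ 2 := by ring

lemma rpow_isLittleO_countLE_Sset {ρ : ℝ} (hρ : ρ < 1) :
    (fun X : ℝ ↦ X ^ ρ) =o[atTop] fun X ↦ (countLE Sset X : ℝ) := by
  refine IsLittleO.trans_isBigO ?_ div_log_sq_isBigO_countLE_Sset
  have hlog := (isBigO_refl (fun X : ℝ ↦ X ^ ρ / log X ^ (2 : ℝ)) atTop).mul_isLittleO
    (isLittleO_log_rpow_rpow_atTop 2 (sub_pos.2 hρ))
  refine hlog.congr' ?_ ?_ <;>
    filter_upwards [eventually_gt_atTop 1] with X hX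
  · exact div_mul_cancel₀ _ (rpow_pos_of_pos (log_pos hX) 2).ne'
  · rw [div_mul_eq_mul_div, ← rpow_add (by linarith), add_sub_cancel, rpow_one, rpow_two]

lemma hasDensityOne_of_isLittleO {S' : Set ℝ}
    (h : (fun X ↦ ({k | nseq k ∉ S' ∧ nseq k ≤ X}.ncard : ℝ)) =o[atTop]
      fun X ↦ (countLE Sset X : ℝ)) : HasDensityOne S' := by
  have hsplit (X : ℝ) : countLE S' X + {k | nseq k ∉ S' ∧ nseq k ≤ X}.ncard = countLE Sset X := by
    rw [countLE_Sset, countLE_eq_ncard, ← Set.ncard_inter_add_ncard_sdiff_eq_ncard {k | nseq k ≤ X}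
      {k | nseq k ∈ S'} (finite_setOf_nseq_le X)]
    simp only [Set.sdiff_eq, Set.inter_def, Set.compl_def, Set.mem_ofPred_eq, and_comm]
  have hpos : ∀ᶠ X in atTop, (countLE Sset X : ℝ) ≠ 0 := by
    filter_upwards [eventually_ge_atTop (nseq 0)] with X hX
    rw [countLE_Sset]
    exact mod_cast ((Set.ncard_pos (finite_setOf_nseq_le X)).2 ⟨0, hX⟩).ne'
  have hlim := h.tendsto_div_nhds_zero.const_sub 1
  rw [sub_zero] at hlim
  refine hlim.congr' ?_
  filter_upwards [hpos] with X hX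
  rw [one_sub_div hX, ← hsplit X]
  push_cast
  rw [add_sub_cancel_right]

end Counting

section Gaps

lemma exists_isSum2Sq_mem_Ioc (m : ℕ) :
    ∃ m' ∈ Ioc m (m + 2 * Nat.sqrt (2 * Nat.sqrt m) + 1), IsSum2Sq m' := by
  set a := Nat.sqrt m
  set q := Nat.sqrt (m - a * a)
  have ha : a * a ≤ m := Nat.sqrt_le m
  have hrem : m - a * a ≤ 2 * a := by have : m ≤ a * a + a + a := Nat.sqrt_le_add m; omega
  have hq : q ≤ Nat.sqrt (2 * a) := Nat.sqrt_le_sqrt hrem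
  have hq_le : q * q ≤ m - a * a := Nat.sqrt_le _
  have hlt_q : m - a * a < (q + 1) * (q + 1) := Nat.lt_succ_sqrt _
  refine ⟨a * a + (q + 1) * (q + 1), Finset.mem_Ioc.2 ⟨by omega, ?_⟩, a, q + 1,
    by push_cast; ring⟩
  calc a * a + (q + 1) * (q + 1) = a * a + q * q + 2 * q + 1 := by ring
    _ ≤ m + 2 * Nat.sqrt (2 * a) + 1 := by omega

lemma nth_isSum2Sq_succ_le (k : ℕ) :
    Nat.nth IsSum2Sq (k + 1) ≤
      Nat.nth IsSum2Sq k + 2 * Nat.sqrt (2 * Nat.sqrt (Nat.nth IsSum2Sq k)) + 1 := by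
  obtain ⟨m', hm', hsum⟩ := exists_isSum2Sq_mem_Ioc (Nat.nth IsSum2Sq k)
  obtain ⟨hlt, hle⟩ := Finset.mem_Ioc.1 hm'
  by_contra! hcon
  exact hlt.not_ge (Nat.le_nth_of_lt_nth_succ (hle.trans_lt hcon) hsum)

lemma natSqrt_two_mul_natSqrt_pow_four_le (m : ℕ) :
    Nat.sqrt (2 * Nat.sqrt m) ^ 4 ≤ 4 * m := by
  calc Nat.sqrt (2 * Nat.sqrt m) ^ 4 = (Nat.sqrt (2 * Nat.sqrt m) ^ 2) ^ 2 := by ring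
    _ ≤ (2 * Nat.sqrt m) ^ 2 := by gcongr; exact Nat.sqrt_le' _
    _ = 4 * Nat.sqrt m ^ 2 := by ring
    _ ≤ 4 * m := by gcongr; exact Nat.sqrt_le' _

lemma nseq_succ_sub_nseq_le {k : ℕ} (hk : 1 ≤ nseq k) :
    nseq (k + 1) - nseq k ≤ 120 * nseq k ^ (1 / 4 : ℝ) := by
  set m := Nat.nth IsSum2Sq k
  set s := Nat.sqrt (2 * Nat.sqrt m)
  have hs : (s : ℝ) ≤ nseq k ^ (1 / 4 : ℝ) := by
    rw [one_div, le_rpow_inv_iff_of_pos (by positivity) (by positivity) (by norm_num),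
      rpow_ofNat]
    calc (s : ℝ) ^ 4 ≤ 4 * m := mod_cast natSqrt_two_mul_natSqrt_pow_four_le m
      _ ≤ nseq k := by
        unfold nseq; gcongr; linarith [thirtySix_le_four_mul_pi_sq]
  have hone : 1 ≤ nseq k ^ (1 / 4 : ℝ) := one_le_rpow hk (by norm_num)
  have hsucc : (Nat.nth IsSum2Sq (k + 1) : ℝ) ≤ m + 2 * s + 1 := mod_cast nth_isSum2Sq_succ_le k
  calc nseq (k + 1) - nseq k = 4 * π ^ 2 * (Nat.nth IsSum2Sq (k + 1) - m) := by
        simp only [nseq, m]; ring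
    _ ≤ 40 * (2 * s + 1) := by
        grw [hsucc, four_mul_pi_sq_le_forty]
        · linarith
        · linarith
    _ ≤ 120 * nseq k ^ (1 / 4 : ℝ) := by linarith

end Gaps

section Lattice

/-- The integers of absolute value at most `y`. -/
def intBall (y : ℝ) : Finset ℤ := Icc (-⌊y⌋) ⌊y⌋

lemma mem_intBall {y : ℝ} {a : ℤ} : a ∈ intBall y ↔ |(a : ℝ)| ≤ y := by
  rw [intBall, Finset.mem_Icc, ← abs_le, Int.le_floor, Int.cast_abs]

lemma card_intBall_le {y : ℝ} (hy : 1 ≤ y) : (#(intBall y) : ℝ) ≤ 3 * y := by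
  have hfloor : 1 ≤ ⌊y⌋ := Int.le_floor.2 (mod_cast hy)
  have hcard : (#(intBall y) : ℤ) = 2 * ⌊y⌋ + 1 := by rw [intBall, Int.card_Icc]; omega
  have hcard' : (#(intBall y) : ℝ) = 2 * ⌊y⌋ + 1 := mod_cast hcard
  linarith [Int.floor_le y]

lemma card_le_of_sq_sub_sq_le {F : Finset ℤ} {L : ℝ} (hL : 1 ≤ L)
    (h : ∀ b ∈ F, ∀ c ∈ F, (b : ℝ) ^ 2 - (c : ℝ) ^ 2 ≤ L) : (#F : ℝ) ≤ 4 * √L := by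
  rcases F.eq_empty_or_nonempty with rfl | hne
  · simp
  obtain ⟨c, hc, hmin⟩ := exists_min_image F (fun b ↦ |b|) hne
  set r := ⌊√L⌋
  have hr : 1 ≤ r := Int.le_floor.2 (by rw [Int.cast_one]; exact one_le_sqrt.2 hL)
  have habs (b) (hb : b ∈ F) : |b| - |c| ≤ r := by
    refine Int.le_floor.2 (le_sqrt_of_sq_le ((?_ : _ ≤ _).trans (h b hb c hc)))
    have hcb : |(c : ℝ)| ≤ |(b : ℝ)| := mod_cast hmin b hb
    push_cast
    nlinarith [sq_abs (b : ℝ), sq_abs (c : ℝ), abs_nonneg (c : ℝ)]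
  have hsub : F ⊆ Icc |c| (|c| + r) ∪ Icc (-|c| - r) (-|c|) := fun b hb ↦ by
    have := hmin b hb
    have := habs b hb
    rw [mem_union, Finset.mem_Icc, Finset.mem_Icc]
    rcases abs_cases b with ⟨_, _⟩ | ⟨_, _⟩ <;> omega
  have hcard : (#F : ℤ) ≤ 2 * (r + 1) := by
    have := (card_le_card hsub).trans (card_union_le _ _)
    simp only [Int.card_Icc] at this
    omega
  have hcard' : (#F : ℝ) ≤ 2 * (r + 1) := mod_cast hcard
  have hr' : (1 : ℝ) ≤ r := mod_cast hr
  linarith [Int.floor_le √L]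

/-- The annulus `A(n, L)` of the lattice points `ξ` with `|4π²|ξ|² - n| ≤ L`. -/
def annulus (n L : ℝ) : Set (Fin 2 → ℤ) := {ξ | |qf ξ - n| ≤ L}

variable {n L : ℝ} {ξ : Fin 2 → ℤ}

lemma mem_annulus : ξ ∈ annulus n L ↔ |qf ξ - n| ≤ L := Iff.rfl

lemma abs_le_sqrt_of_mem_annulus (hLn : L ≤ n) (hξ : ξ ∈ annulus n L) (i : Fin 2) :
    |(ξ i : ℝ)| ≤ √n := by
  have hle : (ξ i : ℝ) ^ 2 ≤ ∑ j, (ξ j : ℝ) ^ 2 :=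
    single_le_sum (f := fun j ↦ (ξ j : ℝ) ^ 2) (fun j _ ↦ sq_nonneg _) (mem_univ i)
  have hqf : 4 * π ^ 2 * ∑ j, (ξ j : ℝ) ^ 2 - n ≤ L := (abs_le.1 hξ).2
  refine abs_le_sqrt ?_
  nlinarith [thirtySix_le_four_mul_pi_sq, sq_nonneg (ξ i : ℝ)]

lemma annulus_subset_piFinset (hLn : L ≤ n) :
    annulus n L ⊆ Fintype.piFinset fun _ : Fin 2 ↦ intBall √n := fun _ hξ ↦
  Fintype.mem_piFinset.2 fun i ↦ mem_intBall.2 (abs_le_sqrt_of_mem_annulus hLn hξ i)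

lemma annulus_finite (hLn : L ≤ n) : (annulus n L).Finite :=
  (finite_toSet _).subset (annulus_subset_piFinset hLn)

lemma card_filter_annulus_le (hL : 1 ≤ L) (A : Finset (Fin 2 → ℤ)) (hA : ↑A ⊆ annulus n L)
    (a : ℤ) : (#{ξ ∈ A | ξ 0 = a} : ℝ) ≤ 4 * √L := by
  classical
  have hinj : Set.InjOn (fun ξ : Fin 2 → ℤ ↦ ξ 1) (A.filter fun ξ ↦ ξ 0 = a) := fun ξ hξ η hη h ↦ by
    simp only [coe_filter, Set.mem_ofPred_eq] at hξ hη
    exact funext (Fin.forall_fin_two.2 ⟨hξ.2.trans hη.2.symm, h⟩)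
  rw [← card_image_of_injOn hinj]
  refine card_le_of_sq_sub_sq_le hL ?_
  simp only [mem_image, mem_filter]
  rintro _ ⟨ξ, ⟨hξ, hξa⟩, rfl⟩ _ ⟨η, ⟨hη, hηa⟩, rfl⟩
  have hub := (abs_le.1 (mem_annulus.1 (hA hξ))).2
  have hlb := (abs_le.1 (mem_annulus.1 (hA hη))).1
  simp only [qf, Fin.sum_univ_two, hξa, hηa] at hub hlb
  nlinarith [thirtySix_le_four_mul_pi_sq]

lemma ncard_annulus_le (hL : 1 ≤ L) (hLn : L ≤ n) :
    ((annulus n L).ncard : ℝ) ≤ 12 * (√n * √L) := by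
  classical
  set A := (annulus_finite hLn).toFinset
  have hA : ↑A = annulus n L := (annulus_finite hLn).coe_toFinset
  have hmaps : Set.MapsTo (fun ξ : Fin 2 → ℤ ↦ ξ 0) A (intBall √n) := fun ξ hξ ↦
    mem_intBall.2 (abs_le_sqrt_of_mem_annulus hLn (hA ▸ hξ) 0)
  rw [← hA, Set.ncard_coe_finset, card_eq_sum_card_fiberwise hmaps, Nat.cast_sum]
  calc ∑ a ∈ intBall √n, (#{ξ ∈ A | ξ 0 = a} : ℝ) ≤ #(intBall √n) * (4 * √L) := by
        rw [← nsmul_eq_mul]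
        exact sum_le_card_nsmul _ _ _ fun a _ ↦ card_filter_annulus_le hL A hA.subset a
    _ ≤ 3 * √n * (4 * √L) := by
        gcongr
        exact card_intBall_le (one_le_sqrt.2 (hL.trans hLn))
    _ = 12 * (√n * √L) := by ring

lemma znorm_sq (ζ : Fin 2 → ℤ) : znorm ζ ^ 2 = ∑ i, (ζ i : ℝ) ^ 2 :=
  sq_sqrt (by positivity)

lemma abs_le_znorm (ζ : Fin 2 → ℤ) (i : Fin 2) : |(ζ i : ℝ)| ≤ znorm ζ :=
  abs_le_sqrt <| single_le_sum (f := fun j ↦ (ζ j : ℝ) ^ 2) (fun _ _ ↦ sq_nonneg _) (mem_univ i)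

lemma qf_add (ξ ζ : Fin 2 → ℤ) :
    qf (ξ + ζ) = qf ξ + 4 * π ^ 2 * (2 * (ξ ⬝ᵥ ζ : ℤ) + znorm ζ ^ 2) := by
  simp only [znorm_sq, qf, dotProduct, Fin.sum_univ_two, Pi.add_apply]
  push_cast
  ring

lemma mul_le_abs_qf_add_sub_of_le_abs_dotProduct {T : ℝ} {ζ : Fin 2 → ℤ} (hξ : ξ ∈ annulus n T)
    (hζ : znorm ζ ^ 2 ≤ T) (hT : T ≤ |((ξ ⬝ᵥ ζ : ℤ) : ℝ)|) : 35 * T ≤ |qf (ξ + ζ) - n| := by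
  set s : ℝ := ((ξ ⬝ᵥ ζ : ℤ) : ℝ)
  set z := znorm ζ ^ 2
  have hz : 0 ≤ z := sq_nonneg _
  have hinner : 35 * T + T ≤ |4 * π ^ 2 * (2 * s + z)| := by
    rw [abs_mul, abs_of_pos (by positivity : 0 < 4 * π ^ 2)]
    have hsz : T ≤ |2 * s + z| := by
      have := abs_sub_abs_le_abs_add (2 * s) z
      rw [abs_mul, abs_two, abs_of_nonneg hz] at this
      linarith
    nlinarith [thirtySix_le_four_mul_pi_sq]
  have := abs_sub_abs_le_abs_add (4 * π ^ 2 * (2 * s + z)) (qf ξ - n)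
  rw [qf_add, add_sub_right_comm, add_comm]
  linarith [mem_annulus.1 hξ]

end Lattice

section Nonresonance

open Asymptotics

lemma card_filter_dotProduct_mem_le {R : Type*} [Ring R] [NoZeroDivisors R] [DecidableEq R] {d : ℕ}
    {ζ : Fin (d + 1) → R} (hζ : ζ ≠ 0) (I J : Finset R) :
    #{ξ ∈ Fintype.piFinset fun _ ↦ I | ξ ⬝ᵥ ζ ∈ J} ≤ #J * #I ^ d := by
  obtain ⟨i, hi⟩ := Function.ne_iff.1 hζ
  -- `ξ` is determined by `ξ ⬝ᵥ ζ` and its coordinates other than `i`.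
  rw [← Fintype.card_piFinset_const I d, ← card_product]
  refine card_le_card_of_injOn (fun ξ ↦ (ξ ⬝ᵥ ζ, i.removeNth ξ)) (fun ξ hξ ↦ ?_) fun ξ _ η _ h ↦ ?_
  · simp only [coe_filter, Set.mem_ofPred_eq, Fintype.mem_piFinset] at hξ
    simp only [coe_product, Set.mem_prod, mem_coe, Fintype.mem_piFinset]
    exact ⟨hξ.2, fun j ↦ hξ.1 _⟩
  · obtain ⟨hdot, hrest⟩ := Prod.mk.inj h
    have hcoord : ξ i = η i := by
      simp only [dotProduct, Fin.sum_univ_succAbove _ i] at hdot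
      have hsum : ∑ j, ξ (i.succAbove j) * ζ (i.succAbove j) =
          ∑ j, η (i.succAbove j) * ζ (i.succAbove j) :=
        sum_congr rfl fun j _ ↦ congrArg (· * _) (congrFun hrest j)
      rw [hsum] at hdot
      exact mul_right_cancel₀ hi (add_right_cancel hdot)
    rw [← Fin.insertNth_self_removeNth i ξ, ← Fin.insertNth_self_removeNth i η, hcoord, hrest]

/-- `x` is nonresonant if no lattice point of the annulus `A(x, x^δ)` is nearly orthogonal to a
short nonzero lattice vector. -/
def IsNonresonant (ε δ σ x : ℝ) : Prop :=
  ∀ ζ : Fin 2 → ℤ, ζ ≠ 0 → znorm ζ ≤ x ^ ε →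
    ∀ ξ ∈ annulus x (x ^ δ), x ^ σ ≤ |((ξ ⬝ᵥ ζ : ℤ) : ℝ)|

/-- The lattice points of size `√X` that are nearly orthogonal to some nonzero `ζ` of size
`X^ε`. -/
def resonantPoints (ε σ X : ℝ) : Finset (Fin 2 → ℤ) :=
  ((Fintype.piFinset fun _ ↦ intBall (X ^ ε)).erase 0).biUnion fun ζ ↦
    {ξ ∈ Fintype.piFinset fun _ ↦ intBall √X | ξ ⬝ᵥ ζ ∈ intBall (X ^ σ)}

/-- The integers within `X^δ` of `|ξ|²` for some resonant point `ξ`; they contain every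
`m = x / (4π²)` for which `x ≤ X` fails to be nonresonant. -/
def resonantValues (ε δ σ X : ℝ) : Finset ℤ :=
  (resonantPoints ε σ X ×ˢ intBall (X ^ δ)).image fun p ↦ p.1 ⬝ᵥ p.1 + p.2

variable {ε δ σ X : ℝ}

lemma card_resonantPoints_le (hε : 0 ≤ ε) (hσ : 0 ≤ σ) (hX : 1 ≤ X) :
    (#(resonantPoints ε σ X) : ℝ) ≤ 81 * X ^ (2 * ε + 1 / 2 + σ) := by
  have hζ : (#((Fintype.piFinset fun _ : Fin 2 ↦ intBall (X ^ ε)).erase 0) : ℝ) ≤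
      (3 * X ^ ε) ^ 2 := by
    grw [card_erase_le, Fintype.card_piFinset_const, Nat.cast_pow,
      card_intBall_le (one_le_rpow hX hε)]
  have hle : #(resonantPoints ε σ X) ≤
      #((Fintype.piFinset fun _ : Fin 2 ↦ intBall (X ^ ε)).erase 0) *
        (#(intBall (X ^ σ)) * #(intBall √X) ^ 1) :=
    card_biUnion_le_card_mul _ _ _ fun ζ hζ ↦
      card_filter_dotProduct_mem_le (ne_of_mem_erase hζ) _ _
  calc (#(resonantPoints ε σ X) : ℝ)
      ≤ #((Fintype.piFinset fun _ : Fin 2 ↦ intBall (X ^ ε)).erase 0) *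
        (#(intBall (X ^ σ)) * #(intBall √X) ^ 1) := mod_cast hle
    _ ≤ (3 * X ^ ε) ^ 2 * (3 * X ^ σ * (3 * √X) ^ 1) := by
        grw [hζ, card_intBall_le (one_le_rpow hX hσ), card_intBall_le (one_le_sqrt.2 hX)]
    _ = 81 * (X ^ ε * X ^ ε * √X * X ^ σ) := by ring
    _ = 81 * X ^ (2 * ε + 1 / 2 + σ) := by
        rw [sqrt_eq_rpow, ← rpow_add (by linarith), ← rpow_add (by linarith),
          ← rpow_add (by linarith), two_mul]

lemma card_resonantValues_le (hε : 0 ≤ ε) (hδ : 0 ≤ δ) (hσ : 0 ≤ σ) (hX : 1 ≤ X) :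
    (#(resonantValues ε δ σ X) : ℝ) ≤ 243 * X ^ (2 * ε + 1 / 2 + σ + δ) := by
  calc (#(resonantValues ε δ σ X) : ℝ)
      ≤ #(resonantPoints ε σ X) * #(intBall (X ^ δ)) := by
        grw [resonantValues, card_image_le, card_product, Nat.cast_mul]
    _ ≤ 81 * X ^ (2 * ε + 1 / 2 + σ) * (3 * X ^ δ) := by
        grw [card_resonantPoints_le hε hσ hX, card_intBall_le (one_le_rpow hX hδ)]
    _ = 243 * (X ^ (2 * ε + 1 / 2 + σ) * X ^ δ) := by ring
    _ = 243 * X ^ (2 * ε + 1 / 2 + σ + δ) := by rw [← rpow_add (by linarith)]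

lemma nth_sub_dotProduct_self_mem_intBall {k : ℕ} {L : ℝ} {ξ : Fin 2 → ℤ}
    (hξ : ξ ∈ annulus (nseq k) L) : (Nat.nth IsSum2Sq k : ℤ) - ξ ⬝ᵥ ξ ∈ intBall L := by
  have hdiff : nseq k - qf ξ = 4 * π ^ 2 * ((Nat.nth IsSum2Sq k - ξ ⬝ᵥ ξ : ℤ) : ℝ) := by
    simp only [nseq, qf, dotProduct, Fin.sum_univ_two]
    push_cast
    ring
  have habs := mem_annulus.1 hξ
  rw [abs_sub_comm, hdiff, abs_mul, abs_of_pos (by positivity)] at habs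
  exact mem_intBall.2 ((le_mul_of_one_le_left (abs_nonneg _)
    (by linarith [thirtySix_le_four_mul_pi_sq])).trans habs)

lemma nth_mem_resonantValues (hε : 0 ≤ ε) (hδ : 0 ≤ δ) (hδ₁ : δ ≤ 1) (hσ : 0 ≤ σ) {k : ℕ}
    (hk : 1 ≤ nseq k) (hkX : nseq k ≤ X) (hres : ¬ IsNonresonant ε δ σ (nseq k)) :
    (Nat.nth IsSum2Sq k : ℤ) ∈ resonantValues ε δ σ X := by
  unfold IsNonresonant at hres
  push Not at hres
  obtain ⟨ζ, hζ₀, hζ, ξ, hξ, hdot⟩ := hres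
  have hmono {α : ℝ} (hα : 0 ≤ α) : nseq k ^ α ≤ X ^ α :=
    rpow_le_rpow (by linarith) hkX hα
  have hξ_le (i) : |(ξ i : ℝ)| ≤ √X :=
    (abs_le_sqrt_of_mem_annulus (rpow_le_self_of_one_le hk hδ₁) hξ i).trans (sqrt_le_sqrt hkX)
  refine mem_image.2 ⟨(ξ, Nat.nth IsSum2Sq k - ξ ⬝ᵥ ξ), mem_product.2 ⟨?_, ?_⟩,
    add_sub_cancel _ _⟩
  · refine mem_biUnion.2 ⟨ζ, mem_erase.2 ⟨hζ₀, ?_⟩, mem_filter.2 ⟨?_, ?_⟩⟩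
    · exact Fintype.mem_piFinset.2 fun i ↦
        mem_intBall.2 ((abs_le_znorm ζ i).trans (hζ.trans (hmono hε)))
    · exact Fintype.mem_piFinset.2 fun i ↦ mem_intBall.2 (hξ_le i)
    · exact mem_intBall.2 (hdot.le.trans (hmono hσ))
  · exact nth_sub_dotProduct_self_mem_intBall (le_trans (mem_annulus.1 hξ) (hmono hδ))

lemma ncard_resonant_le (hε : 0 ≤ ε) (hδ : 0 ≤ δ) (hδ₁ : δ ≤ 1) (hσ : 0 ≤ σ) (hX : 1 ≤ X) :
    ({k | 1 ≤ nseq k ∧ nseq k ≤ X ∧ ¬ IsNonresonant ε δ σ (nseq k)}.ncard : ℝ) ≤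
      243 * X ^ (2 * ε + 1 / 2 + σ + δ) := by
  refine le_trans ?_ (card_resonantValues_le hε hδ hσ hX)
  exact mod_cast ncard_le_card_of_forall_nth_mem fun k hk ↦
    nth_mem_resonantValues hε hδ hδ₁ hσ hk.1 hk.2.1 hk.2.2

lemma hasDensityOne_setOf_isNonresonant (hε : 0 ≤ ε) (hδ : 0 ≤ δ) (hσ : 0 ≤ σ)
    (hsum : 2 * ε + 1 / 2 + σ + δ < 1) {x₀ : ℝ} (hx₀ : 1 ≤ x₀) :
    HasDensityOne {x ∈ Sset | x₀ ≤ x ∧ IsNonresonant ε δ σ x} := by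
  refine hasDensityOne_of_isLittleO (IsBigO.trans_isLittleO ?_ (rpow_isLittleO_countLE_Sset hsum))
  have hδ₁ : δ ≤ 1 := by linarith
  set ρ := 2 * ε + 1 / 2 + σ + δ
  set N := {k | nseq k ≤ x₀}.ncard
  refine IsBigO.of_bound (N + 243) ?_
  filter_upwards [eventually_ge_atTop 1] with X hX
  set R := {k | 1 ≤ nseq k ∧ nseq k ≤ X ∧ ¬ IsNonresonant ε δ σ (nseq k)}
  have hsub : {k | nseq k ∉ {x ∈ Sset | x₀ ≤ x ∧ IsNonresonant ε δ σ x} ∧ nseq k ≤ X} ⊆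
      {k | nseq k ≤ x₀} ∪ R := by
    rintro k ⟨hk, hkX⟩
    rcases le_total (nseq k) x₀ with hle | hge
    · exact .inl hle
    · exact .inr ⟨hx₀.trans hge, hkX, fun hnon ↦ hk ⟨⟨k, rfl⟩, hge, hnon⟩⟩
  have hfin : ({k | nseq k ≤ x₀} ∪ R).Finite :=
    (finite_setOf_nseq_le x₀).union ((finite_setOf_nseq_le X).subset fun k hk ↦ hk.2.1)
  have hcard := (Set.ncard_le_ncard hsub hfin).trans (Set.ncard_union_le _ _)
  have hone : 1 ≤ X ^ ρ := one_le_rpow hX (by positivity)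
  rw [norm_of_nonneg (by positivity), norm_of_nonneg (by positivity)]
  calc _ ≤ (N + R.ncard : ℝ) := mod_cast hcard
    _ ≤ N * X ^ ρ + 243 * X ^ ρ :=
        add_le_add (le_mul_of_one_le_right (by positivity) hone)
          (ncard_resonant_le hε hδ hδ₁ hσ hX)
    _ = (N + 243) * X ^ ρ := by ring

end Nonresonance

section LatticeSum

lemma tsum_ite_le_ncard_mul {α : Type*} {A : Set α} (hA : A.Finite) {P : α → Prop}
    [DecidablePred P] {f : α → ℝ} {c : ℝ} (hc : 0 ≤ c) (hPA : ∀ a, P a → a ∈ A)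
    (hf : ∀ a, P a → f a ≤ c) : ∑' a, (if P a then f a else 0) ≤ A.ncard * c := by
  have hsupp (a) (ha : a ∉ hA.toFinset) : (if P a then f a else 0) = 0 :=
    if_neg fun hP ↦ ha (hA.mem_toFinset.2 (hPA a hP))
  rw [tsum_eq_sum hsupp, Set.ncard_eq_toFinset_card A hA, ← nsmul_eq_mul]
  refine sum_le_card_nsmul _ _ _ fun a _ ↦ ?_
  split_ifs with hP
  exacts [hf a hP, hc]

lemma inv_sq_le_inv_sq_of_le_abs {T y : ℝ} (hT : 0 < T) (h : T ≤ |y|) :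
    (y ^ 2)⁻¹ ≤ (T ^ 2)⁻¹ := by
  rw [← sq_abs y]
  gcongr

lemma sigmaSum_le_of_le_abs_sub {ζ : Fin 2 → ℤ} {n n' L T : ℝ} (hLn : L ≤ n) (hT : 0 < T)
    (hn : ∀ ξ ∈ annulus n L, T ≤ |qf (ξ + ζ) - n|)
    (hn' : ∀ ξ ∈ annulus n L, T ≤ |qf (ξ + ζ) - n'|) :
    SigmaSum ζ n n' L ≤ 2 * ((annulus n L).ncard * (T ^ 2)⁻¹) := by
  have hT' : 0 ≤ (T ^ 2)⁻¹ := by positivity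
  rw [two_mul]
  exact add_le_add
    (tsum_ite_le_ncard_mul (annulus_finite hLn) hT' (fun _ h ↦ h.1) fun ξ h ↦
      inv_sq_le_inv_sq_of_le_abs hT (hn ξ h.1))
    (tsum_ite_le_ncard_mul (annulus_finite hLn) hT' (fun _ h ↦ h.1) fun ξ h ↦
      inv_sq_le_inv_sq_of_le_abs hT (hn' ξ h.1))

variable {ε δ σ : ℝ}

lemma IsNonresonant.mul_le_abs_qf_add_sub {x : ℝ} (h : IsNonresonant ε δ σ x) (hx : 1 ≤ x)
    (hδσ : δ ≤ σ) (hεσ : 2 * ε ≤ σ) {ζ ξ : Fin 2 → ℤ} (hζ₀ : ζ ≠ 0) (hζ : znorm ζ ≤ x ^ ε)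
    (hξ : ξ ∈ annulus x (x ^ δ)) : 35 * x ^ σ ≤ |qf (ξ + ζ) - x| := by
  refine mul_le_abs_qf_add_sub_of_le_abs_dotProduct ?_ ?_ (h ζ hζ₀ hζ ξ hξ)
  · exact le_trans (mem_annulus.1 hξ) (rpow_le_rpow_of_exponent_le hx hδσ)
  · calc znorm ζ ^ 2 ≤ (x ^ ε) ^ 2 := pow_le_pow_left₀ (sqrt_nonneg _) hζ 2
      _ = x ^ (2 * ε) := by rw [mul_comm, rpow_mul (by linarith), rpow_two]
      _ ≤ x ^ σ := rpow_le_rpow_of_exponent_le hx hεσ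

lemma sigmaSum_le_of_isNonresonant (hδ : 0 ≤ δ) (hδ₁ : δ ≤ 1) (hδσ : δ ≤ σ) (hεσ : 2 * ε ≤ σ)
    {k : ℕ} (hk : 1 ≤ nseq k) (hgap : 120 * nseq k ^ (1 / 4 : ℝ) ≤ 34 * nseq k ^ σ)
    (hnon : IsNonresonant ε δ σ (nseq k)) {ζ : Fin 2 → ℤ} (hζ₀ : ζ ≠ 0)
    (hζ : znorm ζ ≤ nseq k ^ ε) :
    SigmaSum ζ (nseq k) (nseq (k + 1)) (nseq k ^ δ) ≤
      24 * nseq k ^ (1 / 2 + δ / 2 - 2 * σ) := by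
  set x := nseq k
  have hx₀ : 0 < x := by linarith
  have hδx : x ^ δ ≤ x := rpow_le_self_of_one_le hk hδ₁
  have hsep (ξ) (hξ : ξ ∈ annulus x (x ^ δ)) : 35 * x ^ σ ≤ |qf (ξ + ζ) - x| :=
    hnon.mul_le_abs_qf_add_sub hk hδσ hεσ hζ₀ hζ hξ
  have hsep_succ (ξ) (hξ : ξ ∈ annulus x (x ^ δ)) : x ^ σ ≤ |qf (ξ + ζ) - nseq (k + 1)| := by
    have htri := abs_sub_le (qf (ξ + ζ)) (nseq (k + 1)) x
    rw [abs_of_pos (sub_pos.2 (nseq_strictMono k.lt_succ_self))] at htri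
    linarith [hsep ξ hξ, nseq_succ_sub_nseq_le hk]
  calc SigmaSum ζ x (nseq (k + 1)) (x ^ δ)
      ≤ 2 * ((annulus x (x ^ δ)).ncard * ((x ^ σ) ^ 2)⁻¹) :=
        sigmaSum_le_of_le_abs_sub hδx (by positivity)
          (fun ξ hξ ↦ by linarith [hsep ξ hξ, rpow_pos_of_pos hx₀ σ]) hsep_succ
    _ ≤ 2 * (12 * (√x * √(x ^ δ)) * ((x ^ σ) ^ 2)⁻¹) := by
        grw [ncard_annulus_le (one_le_rpow hk hδ) hδx]
    _ = 24 * (x ^ (1 / 2 : ℝ) * x ^ (δ / 2) * x ^ (-(2 * σ))) := by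
        rw [sqrt_eq_rpow, sqrt_eq_rpow, ← rpow_mul hx₀.le, mul_one_div, ← rpow_two,
          ← rpow_mul hx₀.le, mul_comm σ 2, ← rpow_neg hx₀.le]
        ring
    _ = 24 * x ^ (1 / 2 + δ / 2 - 2 * σ) := by
        rw [← rpow_add hx₀, ← rpow_add hx₀, sub_eq_add_neg]

lemma exists_forall_mul_rpow_le_mul_rpow {α β a b : ℝ} (hαβ : α < β) (hb : 0 < b) :
    ∃ x₀ ≥ 1, ∀ x ≥ x₀, a * x ^ α ≤ b * x ^ β := by
  obtain ⟨x₁, hx₁⟩ := ((tendsto_rpow_atTop (sub_pos.2 hαβ)).eventually_ge_atTop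
    (a / b)).exists_forall_of_atTop
  refine ⟨max 1 x₁, le_max_left _ _, fun x hx ↦ ?_⟩
  have hx₀ : 0 < x := by linarith [le_max_left 1 x₁]
  calc a * x ^ α ≤ b * x ^ (β - α) * x ^ α := by
        gcongr
        exact (div_le_iff₀' hb).1 (hx₁ x ((le_max_right _ _).trans hx))
    _ = b * x ^ β := by rw [mul_assoc, ← rpow_add hx₀, sub_add_cancel]

end LatticeSum

theorem sigma_sum_bound_general {δ γ : ℝ} (hδ₀ : 0 ≤ δ) (hδ : δ < 1 / 4)
    (hγ : 5 / 2 * δ - 1 / 2 < γ) :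
    ∃ ε > (0 : ℝ), ∃ S' ⊆ Sset ∩ Set.Ici 1, HasDensityOne S' ∧ ∃ C > (0 : ℝ),
      ∀ k, nseq k ∈ S' → ∀ ζ : Fin 2 → ℤ, ζ ≠ 0 → znorm ζ ≤ nseq k ^ ε →
        SigmaSum ζ (nseq k) (nseq (k + 1)) (nseq k ^ δ) ≤ C * nseq k ^ γ := by
  obtain ⟨σ, hσ_gt, hσ_lt⟩ : ∃ σ, max (1 / 4) (1 / 4 + δ / 4 - γ / 2) < σ ∧ σ < 1 / 2 - δ :=
    exists_between (max_lt (by linarith) (by linarith))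
  obtain ⟨hσ, hσγ⟩ := max_lt_iff.1 hσ_gt
  set ε := (1 / 2 - δ - σ) / 4 with hε
  obtain ⟨x₀, hx₀, hgap⟩ :=
    exists_forall_mul_rpow_le_mul_rpow (a := 120) hσ (by norm_num : (0 : ℝ) < 34)
  refine ⟨ε, by linarith, {x ∈ Sset | x₀ ≤ x ∧ IsNonresonant ε δ σ x},
    fun x hx ↦ ⟨hx.1, hx₀.trans hx.2.1⟩, ?_, 24, by norm_num, fun k hk ζ hζ₀ hζ ↦ ?_⟩
  · exact hasDensityOne_setOf_isNonresonant (by linarith) hδ₀ (by linarith) (by linarith) hx₀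
  · obtain ⟨-, hkx₀, hnon⟩ := hk
    have hk₁ : 1 ≤ nseq k := hx₀.trans hkx₀
    calc SigmaSum ζ (nseq k) (nseq (k + 1)) (nseq k ^ δ)
        ≤ 24 * nseq k ^ (1 / 2 + δ / 2 - 2 * σ) :=
          sigmaSum_le_of_isNonresonant hδ₀ (by linarith) (by linarith) (by linarith) hk₁
            (hgap _ hkx₀) hnon hζ₀ hζ
      _ ≤ 24 * nseq k ^ γ := by
          gcongr
          linarith

/-- On a density-one subsequence of `S`, the lattice sum `Σ(ζ, n_k)` is
`O_ε'(n_k^{θ − 2δ + ε'})` uniformly over `0 ≠ |ζ| ≤ n_k^ε`. -/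
theorem sigma_sum_bound :
    ∃ δ ε : ℝ, δ ∈ Set.Ioo (θH / 2) (1/2 - θH) ∧ 0 < ε ∧
    ∃ S' : Set ℝ, S' ⊆ Sset ∧ HasDensityOne S' ∧
      ∀ ε' : ℝ, 0 < ε' → ∃ C : ℝ, 0 < C ∧
        ∀ k : ℕ, nseq k ∈ S' →
        ∀ ζ : Fin 2 → ℤ, ζ ≠ 0 → znorm ζ ≤ (nseq k) ^ ε →
          SigmaSum ζ (nseq k) (nseq (k + 1)) ((nseq k) ^ δ)
            ≤ C * (nseq k) ^ (θH - 2 * δ + ε') := by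
  obtain ⟨ε, hε, S', hS', hdensity, C, hC, hbound⟩ :=
    sigma_sum_bound_general (δ := 4 / 25) (γ := θH - 2 * (4 / 25)) (by norm_num) (by norm_num)
      (by norm_num [θH])
  refine ⟨4 / 25, ε, by norm_num [θH], hε, S', fun x hx ↦ (hS' hx).1, hdensity,
    fun ε' hε' ↦ ⟨C, hC, fun k hk ζ hζ₀ hζ ↦ (hbound k hk ζ hζ₀ hζ).trans ?_⟩⟩
  gcongr
  · exact (hS' hk).2
  · linarith
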